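/- arXiv:1608.02485 — 4 statements merged into one kernel-verified Lean document; each statement's English description precedes it below -/
import Mathlib

section
/- Let n ≥ 1, let σ² > 0 be a real number, let P ∈ ℝ^{n×n} be a symmetric positive semidefinite matrix, and set S = P(P + σ²I)⁻¹. Then for every integer ν ≥ 1, the matrix I − S is invertible, the boosting kernel P_ν := σ²(I − S)^{−ν} − σ²I satisfies that P_ν + σ²I is invertible, and the ℓ₂-boosting estimator coincides with the kernel-based estimator built from P_ν: S · Σ_{i=0}^{ν−1} (I − S)^i = P_ν (P_ν + σ²I)⁻¹. In particular, for every y ∈ ℝⁿ the boosting estimate ŷ(ν) = S Σ_{i=0}^{ν−1}(I − S)^i y equals P_ν(P_ν + σ²I)⁻¹ y. -/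
open Matrix BigOperators

/-!
The residual operator of the smoother built from a kernel `k` and a noise covariance `c` is
`1 - k (k + c)⁻¹ = c (k + c)⁻¹`. The boosting kernel `k_ν` is the solution of
`k_ν + c = (1 - s)^{-ν} c`, so its residual operator is `c c⁻¹ (1 - s)^ν = (1 - s)^ν`.
By the geometric sum, `s ∑_{i < ν} (1 - s)^i` has the same residual operator.
-/

section Ring

open scoped Ring

variable {A : Type*} [Ring A] {c k s : A}

/-- The linear smoother `k (k + c)⁻¹` attached to a kernel `k` and a noise covariance `c`, which
need not be a scalar; `Ring.inverse` makes it meaningful only when `k + c` is a unit. -/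
noncomputable def kernelSmoother (c k : A) : A :=
  k * (k + c)⁻¹ʳ

/-- The kernel representing `ν` steps of boosting with weak learner `s` under noise covariance `c`;
it is `σ² (1 - s)^{-ν} - σ²` for `c = σ²`. The factor `c` stands on the right because it need not
commute with `s`. -/
noncomputable def boostingKernel (c s : A) (ν : ℕ) : A :=
  (1 - s)⁻¹ʳ ^ ν * c - c

theorem one_sub_kernelSmoother (hkc : IsUnit (k + c)) :
    1 - kernelSmoother c k = c * (k + c)⁻¹ʳ := by
  rw [kernelSmoother, sub_eq_iff_eq_add', ← add_mul, Ring.mul_inverse_cancel _ hkc]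

theorem isUnit_one_sub_kernelSmoother (hc : IsUnit c) (hkc : IsUnit (k + c)) :
    IsUnit (1 - kernelSmoother c k) := by
  rw [one_sub_kernelSmoother hkc]
  exact hc.mul hkc.ringInverse

theorem boostingKernel_add (c s : A) (ν : ℕ) :
    boostingKernel c s ν + c = (1 - s)⁻¹ʳ ^ ν * c :=
  sub_add_cancel _ _

theorem isUnit_boostingKernel_add (hc : IsUnit c) (hs : IsUnit (1 - s)) (ν : ℕ) :
    IsUnit (boostingKernel c s ν + c) := by
  rw [boostingKernel_add]
  exact (hs.ringInverse.pow ν).mul hc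

theorem one_sub_kernelSmoother_boostingKernel (hc : IsUnit c) (hs : IsUnit (1 - s)) (ν : ℕ) :
    1 - kernelSmoother c (boostingKernel c s ν) = (1 - s) ^ ν := by
  calc 1 - kernelSmoother c (boostingKernel c s ν)
      = c * ((1 - s)⁻¹ʳ ^ ν * c)⁻¹ʳ := by
        rw [one_sub_kernelSmoother (isUnit_boostingKernel_add hc hs ν), boostingKernel_add]
    _ = c * (c⁻¹ʳ * (1 - s)⁻¹ʳ⁻¹ʳ ^ ν) := by
        rw [Ring.inverse_mul (.inr hc), ← Ring.inverse_pow]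
    _ = (1 - s) ^ ν := by
        rw [Ring.mul_inverse_cancel_left _ _ hc, Ring.inverse_inverse hs]

theorem mul_sum_one_sub_pow_eq_kernelSmoother (hc : IsUnit c) (hs : IsUnit (1 - s)) (ν : ℕ) :
    s * ∑ i ∈ Finset.range ν, (1 - s) ^ i = kernelSmoother c (boostingKernel c s ν) := by
  calc s * ∑ i ∈ Finset.range ν, (1 - s) ^ i
      = 1 - (1 - s) ^ ν := by simpa only [sub_sub_cancel] using mul_neg_geom_sum (1 - s) ν
    _ = kernelSmoother c (boostingKernel c s ν) := by
        rw [← one_sub_kernelSmoother_boostingKernel hc hs ν, sub_sub_cancel]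

theorem boosting_kernel_prop_general (hc : IsUnit c) (hkc : IsUnit (k + c))
    (hs : s = kernelSmoother c k) (ν : ℕ) :
    IsUnit (1 - s) ∧ IsUnit (boostingKernel c s ν + c) ∧
      s * ∑ i ∈ Finset.range ν, (1 - s) ^ i = kernelSmoother c (boostingKernel c s ν) := by
  have hres : IsUnit (1 - s) := hs ▸ isUnit_one_sub_kernelSmoother hc hkc
  exact ⟨hres, isUnit_boostingKernel_add hc hres ν,
    mul_sum_one_sub_pow_eq_kernelSmoother hc hres ν⟩

end Ring

/-- Proposition 1: the ℓ₂-boosting estimator coincides with the kernel-based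
estimator built from the boosting kernel `Pν = σ²(I − S)^{−ν} − σ²I`. -/
theorem boosting_kernel_prop {n : ℕ} (hn : 1 ≤ n) (σ2 : ℝ) (hσ2 : 0 < σ2)
    (P : Matrix (Fin n) (Fin n) ℝ) (hP : P.PosSemidef)
    (S : Matrix (Fin n) (Fin n) ℝ)
    (hS : S = P * (P + σ2 • (1 : Matrix (Fin n) (Fin n) ℝ))⁻¹) :
    ∀ ν : ℕ, 1 ≤ ν →
      IsUnit (1 - S) ∧
      IsUnit ((σ2 • ((1 - S)⁻¹) ^ ν - σ2 • 1) + σ2 • (1 : Matrix (Fin n) (Fin n) ℝ)) ∧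
      S * ∑ i ∈ Finset.range ν, (1 - S) ^ i
        = (σ2 • ((1 - S)⁻¹) ^ ν - σ2 • 1) *
          ((σ2 • ((1 - S)⁻¹) ^ ν - σ2 • 1) + σ2 • 1)⁻¹ ∧
      ∀ y : Fin n → ℝ,
        (S * ∑ i ∈ Finset.range ν, (1 - S) ^ i) *ᵥ y
          = ((σ2 • ((1 - S)⁻¹) ^ ν - σ2 • 1) *
             ((σ2 • ((1 - S)⁻¹) ^ ν - σ2 • 1) + σ2 • 1)⁻¹) *ᵥ y := by
  intro ν _
  have hσ : (σ2 • (1 : Matrix (Fin n) (Fin n) ℝ)).PosDef := PosDef.one.smul hσ2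
  rw [nonsing_inv_eq_ringInverse] at hS
  obtain ⟨hres, hker, hsum⟩ := boosting_kernel_prop_general hσ.isUnit
    (PosDef.posSemidef_add hP hσ).isUnit hS ν
  simp only [kernelSmoother, boostingKernel, mul_smul_one, ← nonsing_inv_eq_ringInverse]
    at hker hsum
  exact ⟨hres, hker, hsum, fun y => congrArg (· *ᵥ y) hsum⟩
end

section
/- Let n ≥ 1, let σ² > 0 and λ > 0 be real numbers, let d₁,…,dₙ > 0 and z₁,…,zₙ be real numbers, and suppose λ dᵢ > zᵢ² − σ² for every i (i.e., λ exceeds max_i (zᵢ² − σ²)/dᵢ). Set αᵢ = σ²/(λdᵢ + σ²) ∈ (0,1) and J(ν) = Σ_{i=1}^n zᵢ² αᵢ^{2ν} + 2σ²n − 2σ² Σ_{i=1}^n αᵢ^ν (real powers). Then J is strictly increasing on [1,∞); in particular ν = 1 is the unique minimizer of J over [1,∞), i.e., SURE suggests performing no boosting iterations. -/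
open BigOperators

/-!
Writing `x = αᵢ ^ ν`, the `i`-th summand of `J(ν)` is, up to a constant, the quadratic
`zᵢ² x² - 2σ² x`, which is strictly decreasing as long as `zᵢ² x ≤ σ²`. Since `0 < αᵢ < 1`, `x`
decreases from `αᵢ` as `ν` increases from `1`, so it stays in that range as soon as `αᵢ` lies in it,
which is the condition `zᵢ² - σ² ≤ λ dᵢ`.
-/

theorem strictAntiOn_mul_sq_sub_two_mul {R : Type*} [CommRing R] [LinearOrder R]
    [IsStrictOrderedRing R] {s : R} (hs : s ≠ 0) (w : R) :
    StrictAntiOn (fun x => w * x ^ 2 - 2 * s * x) {x | w * x ≤ s} := by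
  intro x (hx : w * x ≤ s) y (hy : w * y ≤ s) hxy
  have h_sum_ne : w * x + w * y ≠ 2 * s := by
    intro h
    have hxs : w * x = s := by linarith
    have hys : w * y = s := by linarith
    have hw : w ≠ 0 := left_ne_zero_of_mul (hxs ▸ hs)
    exact hxy.ne (mul_left_cancel₀ hw (hxs.trans hys.symm))
  have h_sum_lt : w * x + w * y < 2 * s := lt_of_le_of_ne (by linarith) h_sum_ne
  have h_factor : (w * x ^ 2 - 2 * s * x) - (w * y ^ 2 - 2 * s * y) =
      (y - x) * (2 * s - (w * x + w * y)) := by ring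
  exact sub_pos.mp (h_factor ▸ mul_pos (sub_pos.mpr hxy) (sub_pos.mpr h_sum_lt))

theorem strictMonoOn_mul_rpow_two_mul_sub {s w α ν₀ : ℝ} (hs : s ≠ 0) (hw : 0 ≤ w)
    (hα₀ : 0 < α) (hα₁ : α < 1) (h : w * α ^ ν₀ ≤ s) :
    StrictMonoOn (fun ν : ℝ => w * α ^ (2 * ν) - 2 * s * α ^ ν) (Set.Ici ν₀) := by
  have h_anti : StrictAnti (fun ν : ℝ => α ^ ν) := Real.strictAnti_rpow_of_base_lt_one hα₀ hα₁
  have h_maps : Set.MapsTo (fun ν : ℝ => α ^ ν) (Set.Ici ν₀) {x | w * x ≤ s} := fun ν hν =>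
    (mul_le_mul_of_nonneg_left (h_anti.antitone hν) hw).trans h
  have h_sq (ν : ℝ) : α ^ (2 * ν) = (α ^ ν) ^ 2 := by
    rw [mul_comm]; exact Real.rpow_mul_natCast hα₀.le ν 2
  simp only [h_sq]
  exact (strictAntiOn_mul_sq_sub_two_mul hs w).comp (h_anti.strictAntiOn _) h_maps

section BoostingSURE

variable {ι : Type*} [Fintype ι]

/-- The SURE objective `J` of the boosting smoother as a function of the real iteration parameter
`ν`, for noise variance `s = σ²`, squared rotated observations `w i = zᵢ²` and shrinkage factors
`α i = αᵢ`; the sample size is the cardinality of the index type. -/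
noncomputable def boostingSURE (s : ℝ) (w α : ι → ℝ) (ν : ℝ) : ℝ :=
  ∑ i, w i * α i ^ (2 * ν) + 2 * s * (Fintype.card ι : ℝ) - 2 * s * ∑ i, α i ^ ν

theorem boostingSURE_eq_sum_add (s : ℝ) (w α : ι → ℝ) (ν : ℝ) :
    boostingSURE s w α ν =
      ∑ i, (w i * α i ^ (2 * ν) - 2 * s * α i ^ ν) + 2 * s * (Fintype.card ι : ℝ) := by
  rw [boostingSURE, Finset.sum_sub_distrib, Finset.mul_sum]
  ring

theorem strictMonoOn_boostingSURE [Nonempty ι] {s ν₀ : ℝ} {w α : ι → ℝ} (hs : s ≠ 0)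
    (hw : ∀ i, 0 ≤ w i) (hα₀ : ∀ i, 0 < α i) (hα₁ : ∀ i, α i < 1)
    (h : ∀ i, w i * α i ^ ν₀ ≤ s) :
    StrictMonoOn (boostingSURE s w α) (Set.Ici ν₀) := by
  intro a ha b hb hab
  rw [boostingSURE_eq_sum_add, boostingSURE_eq_sum_add]
  gcongr ?_ + _
  exact Finset.sum_lt_sum_of_nonempty Finset.univ_nonempty fun i _ =>
    strictMonoOn_mul_rpow_two_mul_sub hs (hw i) (hα₀ i) (hα₁ i) (h i) ha hb hab

end BoostingSURE

theorem mul_div_add_le_iff_sub_le {K : Type*} [Field K] [LinearOrder K] [IsStrictOrderedRing K]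
    {s c : K} (hs : 0 < s) (hcs : 0 < c + s) (w : K) :
    w * (s / (c + s)) ≤ s ↔ w - s ≤ c := by
  rw [mul_div_left_comm, mul_le_iff_le_one_right hs, div_le_one hcs, sub_le_iff_le_add]

/-- If `λdᵢ > zᵢ² − σ²` for all `i` (the weak learner is strong), the SURE
objective `J(ν) = Σᵢ zᵢ²αᵢ^{2ν} + 2σ²n − 2σ² Σᵢ αᵢ^ν`, with
`αᵢ = σ²/(λdᵢ + σ²)`, is strictly increasing on `[1,∞)`, so `ν = 1` is its
unique minimizer there: SURE suggests no boosting iterations. -/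
theorem sure_strong_learner_nu_one {n : ℕ} (hn : 1 ≤ n) (σ2 lam : ℝ)
    (hσ2 : 0 < σ2) (hlam : 0 < lam)
    (d z : Fin n → ℝ) (hd : ∀ i, 0 < d i)
    (hcond : ∀ i, (z i) ^ 2 - σ2 < lam * d i) :
    StrictMonoOn
      (fun ν : ℝ =>
        ∑ i : Fin n, (z i) ^ 2 * (σ2 / (lam * d i + σ2)) ^ (2 * ν)
          + 2 * σ2 * (n : ℝ)
          - 2 * σ2 * ∑ i : Fin n, (σ2 / (lam * d i + σ2)) ^ ν)
      (Set.Ici 1) ∧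
    ∀ ν ∈ Set.Ici (1 : ℝ), ν ≠ 1 →
      (∑ i : Fin n, (z i) ^ 2 * (σ2 / (lam * d i + σ2)) ^ (2 * (1 : ℝ))
          + 2 * σ2 * (n : ℝ)
          - 2 * σ2 * ∑ i : Fin n, (σ2 / (lam * d i + σ2)) ^ (1 : ℝ))
        < ∑ i : Fin n, (z i) ^ 2 * (σ2 / (lam * d i + σ2)) ^ (2 * ν)
          + 2 * σ2 * (n : ℝ)
          - 2 * σ2 * ∑ i : Fin n, (σ2 / (lam * d i + σ2)) ^ ν := by
  have : Nonempty (Fin n) := ⟨⟨0, hn⟩⟩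
  have hc (i : Fin n) : 0 < lam * d i := mul_pos hlam (hd i)
  have hcs (i : Fin n) : 0 < lam * d i + σ2 := add_pos (hc i) hσ2
  have h_threshold (i : Fin n) : z i ^ 2 * (σ2 / (lam * d i + σ2)) ^ (1 : ℝ) ≤ σ2 := by
    rw [Real.rpow_one]
    exact (mul_div_add_le_iff_sub_le hσ2 (hcs i) _).mpr (hcond i).le
  have h_mono := strictMonoOn_boostingSURE hσ2.ne' (fun i => sq_nonneg (z i))
    (fun i => div_pos hσ2 (hcs i))
    (fun i => (div_lt_one (hcs i)).mpr (lt_add_of_pos_left σ2 (hc i))) h_threshold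
  simp only [StrictMonoOn, boostingSURE, Fintype.card_fin] at h_mono
  exact ⟨h_mono, fun ν hν hne => h_mono Set.self_mem_Ici hν (lt_of_le_of_ne hν hne.symm)⟩
end

section
/- Let n ≥ 1, let σ² > 0 and λ > 0 be real numbers, let d₁,…,dₙ > 0 and z₁,…,zₙ be real numbers, and suppose λ dᵢ < zᵢ² − σ² for every i (i.e., λ is below min_i (zᵢ² − σ²)/dᵢ). Set αᵢ = σ²/(λdᵢ + σ²) ∈ (0,1) and J(ν) = Σ_{i=1}^n zᵢ² αᵢ^{2ν} + 2σ²n − 2σ² Σ_{i=1}^n αᵢ^ν (real powers). Then the derivative of J at ν = 1 is strictly negative: J′(1) = 2 Σ_{i=1}^n log(αᵢ) αᵢ (zᵢ² αᵢ − σ²) < 0; consequently there exists ν > 1 with J(ν) < J(1), i.e., SURE favors performing boosting iterations. -/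
open BigOperators

/-! Each coordinate contributes `2 log α · α ^ ν * (z² α ^ ν - σ²)` to `J′(ν)`. At `ν = 1` the
weak learner condition `λ d < z² - σ²` says exactly that `σ² < z² α`, so every coordinate with
`α < 1` has a negative contribution, while one with `α = 1` (a zero eigenvalue) contributes nothing
because `log α = 0`. A negative derivative at `1` makes `J` drop immediately to the right of `1`. -/

open Set Topology

theorem eventually_nhdsGT_lt_of_hasDerivWithinAt_neg {f : ℝ → ℝ} {f' x : ℝ}
    (hf : HasDerivWithinAt f f' (Ioi x) x) (hf' : f' < 0) : ∀ᶠ y in 𝓝[>] x, f y < f x := by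
  filter_upwards [hf.limsup_slope_le' self_notMem_Ioi hf', self_mem_nhdsWithin] with y hslope hxy
  exact (slope_neg_iff_of_le (le_of_lt hxy)).mp hslope

/-- The eigenvalue `α = σ² / (κ + σ²)` of `I - S`, where `S` is the weak learner with noise variance
`σ²` and `κ = λ d` is the corresponding eigenvalue of the scaled kernel. -/
noncomputable def residualFactor (σ2 κ : ℝ) : ℝ :=
  σ2 / (κ + σ2)

section residualFactor

variable {σ2 κ : ℝ}

theorem residualFactor_pos (hσ2 : 0 < σ2) (hκ : 0 < κ + σ2) : 0 < residualFactor σ2 κ :=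
  div_pos hσ2 hκ

theorem residualFactor_le_one_iff (hκ : 0 < κ + σ2) : residualFactor σ2 κ ≤ 1 ↔ 0 ≤ κ := by
  rw [residualFactor, div_le_one hκ, le_add_iff_nonneg_left]

theorem residualFactor_lt_one_iff (hκ : 0 < κ + σ2) : residualFactor σ2 κ < 1 ↔ 0 < κ := by
  rw [residualFactor, div_lt_one hκ, lt_add_iff_pos_left]

theorem lt_mul_residualFactor_iff (hσ2 : 0 < σ2) (hκ : 0 < κ + σ2) {w : ℝ} :
    σ2 < w * residualFactor σ2 κ ↔ κ < w - σ2 := by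
  rw [residualFactor, mul_div_left_comm, lt_mul_iff_one_lt_right hσ2, one_lt_div hκ,
    lt_sub_iff_add_lt]

end residualFactor

section sureObjective

variable {ι : Type*} [Fintype ι]

/-- The SURE objective `J(ν)` of the boosting smoother `I - (I - S) ^ ν`, in coordinates where
`I - S` is diagonal with entries `α i` and the data vector has components `z i`. The iteration
parameter `ν` is continuous, so the powers are real powers. -/
noncomputable def sureObjective (σ2 : ℝ) (z α : ι → ℝ) (ν : ℝ) : ℝ :=
  ∑ i, z i ^ 2 * α i ^ (2 * ν) + 2 * σ2 * Fintype.card ι - 2 * σ2 * ∑ i, α i ^ ν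

/-- The closed form of `J′(ν)` for the SURE objective `J`; it is the derivative of `sureObjective`
when all `α i` are positive. -/
noncomputable def sureObjectiveDeriv (σ2 : ℝ) (z α : ι → ℝ) (ν : ℝ) : ℝ :=
  2 * ∑ i, Real.log (α i) * α i ^ ν * (z i ^ 2 * α i ^ ν - σ2)

variable {σ2 ν : ℝ} {z α : ι → ℝ}

theorem hasDerivAt_sureObjective (hα : ∀ i, 0 < α i) :
    HasDerivAt (sureObjective σ2 z α) (sureObjectiveDeriv σ2 z α ν) ν := by
  have hasDerivAt_residual : HasDerivAt (fun ν ↦ ∑ i, z i ^ 2 * α i ^ (2 * ν))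
      (∑ i, z i ^ 2 * (Real.log (α i) * 2 * α i ^ (2 * ν))) ν :=
    .fun_sum fun i _ ↦ ((hasDerivAt_const_mul 2).const_rpow (hα i)).const_mul _
  have hasDerivAt_trace : HasDerivAt (fun ν ↦ ∑ i, α i ^ ν)
      (∑ i, Real.log (α i) * 1 * α i ^ ν) ν :=
    .fun_sum fun i _ ↦ (hasDerivAt_id' ν).const_rpow (hα i)
  refine ((hasDerivAt_residual.add_const _).sub (hasDerivAt_trace.const_mul _)).congr_deriv ?_
  rw [sureObjectiveDeriv, Finset.mul_sum, Finset.mul_sum, ← Finset.sum_sub_distrib]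
  refine Finset.sum_congr rfl fun i _ ↦ ?_
  rw [two_mul ν, Real.rpow_add (hα i)]
  ring

theorem sureObjectiveDeriv_neg (hα : ∀ i, 0 < α i) (hα_le : ∀ i, α i ≤ 1)
    (hα_lt : ∃ i, α i < 1) (hz : ∀ i, α i < 1 → σ2 < z i ^ 2 * α i ^ ν) :
    sureObjectiveDeriv σ2 z α ν < 0 := by
  have term_neg (i : ι) (hi : α i < 1) :
      Real.log (α i) * α i ^ ν * (z i ^ 2 * α i ^ ν - σ2) < 0 :=
    mul_neg_of_neg_of_pos
      (mul_neg_of_neg_of_pos (Real.log_neg (hα i) hi) (Real.rpow_pos_of_pos (hα i) ν))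
      (sub_pos.mpr (hz i hi))
  have term_nonpos (i : ι) : Real.log (α i) * α i ^ ν * (z i ^ 2 * α i ^ ν - σ2) ≤ 0 := by
    rcases (hα_le i).lt_or_eq with hlt | heq
    · exact (term_neg i hlt).le
    · simp [heq]
  obtain ⟨i, hi⟩ := hα_lt
  exact mul_neg_of_pos_of_neg two_pos <|
    Finset.sum_neg' (fun j _ ↦ term_nonpos j) ⟨i, Finset.mem_univ i, term_neg i hi⟩

theorem sure_weak_learner_boosting_helps_general {lam : ℝ} {d : ι → ℝ} (hσ2 : 0 < σ2)
    (hlam : 0 < lam) (hd : ∀ i, 0 ≤ d i) (hd_pos : ∃ i, 0 < d i)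
    (hcond : ∀ i, 0 < d i → lam * d i < z i ^ 2 - σ2) :
    let α := fun i ↦ residualFactor σ2 (lam * d i)
    HasDerivAt (sureObjective σ2 z α) (sureObjectiveDeriv σ2 z α 1) 1 ∧
      sureObjectiveDeriv σ2 z α 1 < 0 ∧
      ∃ ν, 1 < ν ∧ sureObjective σ2 z α ν < sureObjective σ2 z α 1 := by
  intro α
  have hκ (i : ι) : 0 < lam * d i + σ2 := add_pos_of_nonneg_of_pos (mul_nonneg hlam.le (hd i)) hσ2
  have hα (i : ι) : 0 < α i := residualFactor_pos hσ2 (hκ i)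
  have hα_le (i : ι) : α i ≤ 1 :=
    (residualFactor_le_one_iff (hκ i)).mpr (mul_nonneg hlam.le (hd i))
  have hα_lt (i : ι) : α i < 1 ↔ 0 < d i :=
    (residualFactor_lt_one_iff (hκ i)).trans (mul_pos_iff_of_pos_left hlam)
  have hz (i : ι) (hi : α i < 1) : σ2 < z i ^ 2 * α i ^ (1 : ℝ) := by
    rw [Real.rpow_one]
    exact (lt_mul_residualFactor_iff hσ2 (hκ i)).mpr (hcond i ((hα_lt i).mp hi))
  have hderiv : HasDerivAt (sureObjective σ2 z α) (sureObjectiveDeriv σ2 z α 1) 1 :=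
    hasDerivAt_sureObjective hα
  have hneg : sureObjectiveDeriv σ2 z α 1 < 0 :=
    sureObjectiveDeriv_neg hα hα_le (hd_pos.imp fun i ↦ (hα_lt i).mpr) hz
  obtain ⟨ν, hν_lt, hν⟩ :=
    ((eventually_nhdsGT_lt_of_hasDerivWithinAt_neg hderiv.hasDerivWithinAt hneg).and
      self_mem_nhdsWithin).exists
  exact ⟨hderiv, hneg, ν, hν, hν_lt⟩

end sureObjective

/-- If `λdᵢ < zᵢ² − σ²` for all `i` (the weak learner is weak), the SURE
objective `J(ν) = Σᵢ zᵢ²αᵢ^{2ν} + 2σ²n − 2σ² Σᵢ αᵢ^ν`, `αᵢ = σ²/(λdᵢ + σ²)`,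
has strictly negative derivative at `ν = 1`, namely
`J′(1) = 2 Σᵢ log(αᵢ)αᵢ(zᵢ²αᵢ − σ²) < 0`; hence some `ν > 1` improves on
`ν = 1`: SURE favors boosting. -/
theorem sure_weak_learner_boosting_helps {n : ℕ} (hn : 1 ≤ n) (σ2 lam : ℝ)
    (hσ2 : 0 < σ2) (hlam : 0 < lam)
    (d z : Fin n → ℝ) (hd : ∀ i, 0 < d i)
    (hcond : ∀ i, lam * d i < (z i) ^ 2 - σ2) :
    deriv
        (fun ν : ℝ =>
          ∑ i : Fin n, (z i) ^ 2 * (σ2 / (lam * d i + σ2)) ^ (2 * ν)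
            + 2 * σ2 * (n : ℝ)
            - 2 * σ2 * ∑ i : Fin n, (σ2 / (lam * d i + σ2)) ^ ν) 1
      = 2 * ∑ i : Fin n,
          Real.log (σ2 / (lam * d i + σ2)) * (σ2 / (lam * d i + σ2)) *
            ((z i) ^ 2 * (σ2 / (lam * d i + σ2)) - σ2) ∧
    2 * ∑ i : Fin n,
        Real.log (σ2 / (lam * d i + σ2)) * (σ2 / (lam * d i + σ2)) *
          ((z i) ^ 2 * (σ2 / (lam * d i + σ2)) - σ2) < 0 ∧
    ∃ ν : ℝ, 1 < ν ∧
      (∑ i : Fin n, (z i) ^ 2 * (σ2 / (lam * d i + σ2)) ^ (2 * ν)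
          + 2 * σ2 * (n : ℝ)
          - 2 * σ2 * ∑ i : Fin n, (σ2 / (lam * d i + σ2)) ^ ν)
        < ∑ i : Fin n, (z i) ^ 2 * (σ2 / (lam * d i + σ2)) ^ (2 * (1 : ℝ))
          + 2 * σ2 * (n : ℝ)
          - 2 * σ2 * ∑ i : Fin n, (σ2 / (lam * d i + σ2)) ^ (1 : ℝ) := by
  obtain ⟨hderiv, hneg, hexists⟩ := sure_weak_learner_boosting_helps_general (z := z) hσ2 hlam
    (fun i ↦ (hd i).le) ⟨⟨0, hn⟩, hd _⟩ fun i _ ↦ hcond i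
  simpa only [sureObjective.eq_unfold, sureObjectiveDeriv, residualFactor, Fintype.card_fin,
    Real.rpow_one] using And.intro hderiv.deriv (And.intro hneg hexists)
end

section
/- Let n ≥ 1, let σ² > 0 be a real number, let P ∈ ℝ^{n×n} be a symmetric positive semidefinite matrix, and set S = P(P + σ²I)⁻¹. Then for every integer ν ≥ 1 the boosting kernel P_ν = σ²(I − S)^{−ν} − σ²I is symmetric and positive semidefinite. -/
open Matrix

/-!
Since `1 - S = σ² (P + σ² 1)⁻¹`, the inverse `(1 - S)⁻¹` equals `1 + P / σ²`. The binomial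
expansion of `(1 + P / σ²) ^ ν - 1` is a sum of powers of `P / σ²` with nonnegative coefficients.
-/

theorem one_add_pow_sub_one {R : Type*} [Ring R] (a : R) (k : ℕ) :
    (1 + a) ^ k - 1 = ∑ i ∈ Finset.range k, k.choose (i + 1) • a ^ (i + 1) := by
  rw [add_comm, (Commute.one_right a).add_pow, Finset.sum_range_succ']
  simp [← nsmul_eq_mul']

-- `inv_nonneg` requires `PosMulReflectLT`, which `StarOrderedRing` does not supply.
theorem inv_nonneg_of_starOrderedRing {K : Type*} [DivisionSemiring K] [PartialOrder K]
    [StarRing K] [StarOrderedRing K] {a : K} (ha : 0 ≤ a) : 0 ≤ a⁻¹ := by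
  have hstar : star a⁻¹ = a⁻¹ := by rw [star_inv₀, (IsSelfAdjoint.of_nonneg ha).star_eq]
  calc
    0 ≤ star a⁻¹ * a * a⁻¹ := star_left_conjugate_nonneg ha a⁻¹
    _ = a⁻¹ := by simpa [hstar] using mul_inv_mul_cancel a⁻¹

section

variable {m : Type*} [Fintype m] [DecidableEq m]

theorem one_sub_mul_inv_add {R : Type*} [CommRing R] {A B : Matrix m m R} (h : IsUnit (A + B)) :
    1 - A * (A + B)⁻¹ = B * (A + B)⁻¹ := by
  have hdet : IsUnit (A + B).det := (isUnit_iff_isUnit_det _).mp h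
  rw [sub_eq_iff_eq_add', ← add_mul, mul_nonsing_inv _ hdet]

theorem inv_one_sub_mul_inv_add {R : Type*} [CommRing R] {A B : Matrix m m R}
    (hB : IsUnit B) (h : IsUnit (A + B)) : (1 - A * (A + B)⁻¹)⁻¹ = 1 + A * B⁻¹ := by
  have hBdet : IsUnit B.det := (isUnit_iff_isUnit_det _).mp hB
  have hdet : IsUnit (A + B).det := (isUnit_iff_isUnit_det _).mp h
  calc
    (1 - A * (A + B)⁻¹)⁻¹ = (A + B) * B⁻¹ := by
      rw [one_sub_mul_inv_add h, Matrix.mul_inv_rev, nonsing_inv_nonsing_inv _ hdet]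
    _ = 1 + A * B⁻¹ := by rw [add_mul, mul_nonsing_inv _ hBdet, add_comm]

theorem inv_one_sub_mul_inv_add_smul_one {K : Type*} [Field K] {A : Matrix m m K} {c : K}
    (hc : c ≠ 0) (h : IsUnit (A + c • (1 : Matrix m m K))) :
    (1 - A * (A + c • (1 : Matrix m m K))⁻¹)⁻¹ = 1 + c⁻¹ • A := by
  have hc_one : IsUnit (c • (1 : Matrix m m K)) := isUnit_one.smul (Units.mk0 c hc)
  have hc_inv : (c • (1 : Matrix m m K))⁻¹ = c⁻¹ • 1 :=
    inv_eq_left_inv (by simp [hc])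
  rw [inv_one_sub_mul_inv_add hc_one h, hc_inv, Matrix.mul_smul, mul_one]

theorem posSemidef_one_add_pow_sub_one {R : Type*} [Ring R] [PartialOrder R] [StarRing R]
    [StarOrderedRing R] {A : Matrix m m R} (hA : A.PosSemidef) (k : ℕ) :
    ((1 + A) ^ k - 1).PosSemidef := by
  rw [one_add_pow_sub_one]
  refine posSemidef_sum _ fun i _ => ?_
  rw [← Nat.cast_smul_eq_nsmul ℕ]
  exact (hA.pow (i + 1)).smul (Nat.zero_le _)

theorem boosting_kernel_posSemidef_general {K : Type*} [Field K] [PartialOrder K] [StarRing K]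
    [StarOrderedRing K] {σ2 : K} (hσ2 : 0 < σ2) {P S : Matrix m m K} (hP : P.PosSemidef)
    (hS : S = P * (P + σ2 • (1 : Matrix m m K))⁻¹) (ν : ℕ) :
    (σ2 • ((1 - S)⁻¹) ^ ν - σ2 • 1).PosSemidef := by
  have hunit : IsUnit (P + σ2 • (1 : Matrix m m K)) :=
    (PosDef.posSemidef_add hP (PosDef.one.smul hσ2)).isUnit
  have hinv : (1 - S)⁻¹ = 1 + σ2⁻¹ • P := by
    rw [hS, inv_one_sub_mul_inv_add_smul_one hσ2.ne' hunit]
  have hscaled : (σ2⁻¹ • P).PosSemidef := hP.smul (inv_nonneg_of_starOrderedRing hσ2.le)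
  rw [hinv, ← smul_sub]
  exact (posSemidef_one_add_pow_sub_one hscaled ν).smul hσ2.le

end

/-- The boosting kernel `P_ν = σ²(I − S)^{−ν} − σ²I`, with
`S = P(P + σ²I)⁻¹` for symmetric PSD `P` and `σ² > 0`, is symmetric and
positive semidefinite for every integer `ν ≥ 1`. -/
theorem boosting_kernel_posSemidef {n : ℕ} (hn : 1 ≤ n) (σ2 : ℝ) (hσ2 : 0 < σ2)
    (P S : Matrix (Fin n) (Fin n) ℝ) (hP : P.PosSemidef)
    (hS : S = P * (P + σ2 • (1 : Matrix (Fin n) (Fin n) ℝ))⁻¹)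
    (ν : ℕ) (hν : 1 ≤ ν) :
    (σ2 • ((1 - S)⁻¹) ^ ν - σ2 • 1).PosSemidef :=
  boosting_kernel_posSemidef_general hσ2 hP hS ν
end
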